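/- (Local truncation error with inexact previous values.) Under the setup of the (n+1)-th order local approximation with fixed pairwise distinct nonzero ratios r_1, …, r_n (so δ_k = r_k·h, λ_{i_k} = λ_s + r_k·h, λ_t = λ_s + h), assume additionally that f(·,λ) is Lipschitz in its first argument uniformly in λ. Let x be the exact solution, let x̂_s, x̂_{λ_{i_1}}, …, x̂_{λ_{i_n}} be (possibly inexact) values, and let x̂_t be the local approximation computed from the parameterization values g evaluated at the inexact points (x̂_s, λ_s) and (x̂_{λ_{i_k}}, λ_{i_k}). Write Δ_u := x̂_u − x(λ_u) for u ∈ {s, λ_{i_1}, …, λ_{i_n}, t} and h := λ_t − λ_s. Then there exist constants C > 0, h₀ > 0, δ₀ > 0 such that for all 0 < h ≤ h₀ and all inexact values with max ‖Δ‖ ≤ δ₀: ‖ Δ_t − (α(λ_t)·A(λ_s,λ_t)/α(λ_s))·Δ_s ‖ ≤ C·h·( ‖Δ_s‖ + Σ_{k=1}^{n} ‖Δ_{λ_{i_k}}‖ + h^{n+1} ). -/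

import Mathlib

/-!
Along the exact solution, `e^{∫ l}·x/α` has derivative `-E·(G + B)`, where `G` is the
parameterization along the trajectory, `E = e^{∫ (l+s)}` and `B` is the integral of `e^{-∫ s}·b`.
Comparing with the scheme, the propagated error is exactly (`error_eq_integral`)
`α(λ_t)·A(λ_s,λ_t)·∫ E(v)·(G(v) - P(v)) dv` over `[λ_s, λ_t]`, where `P` is the polynomial
interpolating the inexact values. Since the interval has length `h` and the weights are bounded,
it suffices that `|G - P|` is at most a constant times `‖Δ_s‖ + ∑ ‖Δ_k‖ + h^(n+1)` there.

For this, `G` is compared with its Taylor polynomial at `λ_s` (`taylor_two_sided`; the expansion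
has to be two-sided because the ratios `r_k` may be negative). The differences between the computed
and the Taylor coefficients, scaled by `h^(j+1)`, solve a linear system with the fixed matrix
`r_k^(j+1)`, whose right-hand side is controlled by the Lipschitz bound for `f` and the Taylor
remainder; that matrix is invertible (`scaled_vandermonde_bound`).
-/

open MeasureTheory Set

/-- The generalized parameterization `g` with base point `p`:
`g_p(x, u) := exp(−∫_p^u s)·f(x, u) − ∫_p^u exp(−∫_p^r s)·b(r) dr` (element-wise). -/
noncomputable def gpar (D : ℕ) (s b : ℝ → Fin D → ℝ)
    (f : (Fin D → ℝ) → ℝ → Fin D → ℝ) (p : ℝ) (xv : Fin D → ℝ) (u : ℝ) :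
    Fin D → ℝ :=
  fun i => Real.exp (-(∫ τ in p..u, s τ i)) * f xv u i
    - ∫ r in p..u, Real.exp (-(∫ τ in p..r, s τ i)) * b r i

/-- The system with matrix `r_k ^ (j+1)` is stably solvable: this matrix is a Vandermonde matrix
with its rows scaled by the nonzero `r_k`, hence invertible. -/
lemma scaled_vandermonde_bound {n : ℕ} (r : Fin n → ℝ) (hrne : ∀ k, r k ≠ 0)
    (hrinj : Function.Injective r) :
    ∃ M : ℝ, 0 ≤ M ∧ ∀ w e : Fin n → ℝ, (∀ k, ∑ j : Fin n, r k ^ ((j : ℕ) + 1) * w j = e k) →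
      ∀ j, |w j| ≤ M * ∑ k, |e k| := by
  set A : Matrix (Fin n) (Fin n) ℝ := Matrix.diagonal r * Matrix.vandermonde r with hA
  have hdet : IsUnit A.det := by
    rw [hA, Matrix.det_mul, Matrix.det_diagonal, isUnit_iff_ne_zero]
    exact mul_ne_zero (Finset.prod_ne_zero_iff.mpr fun k _ => hrne k)
      (Matrix.det_vandermonde_ne_zero_iff.mpr hrinj)
  refine ⟨∑ j, ∑ k, |A⁻¹ j k|, by positivity, fun w e hwe j => ?_⟩
  have hAw : A.mulVec w = e := by
    funext k
    rw [← hwe k]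
    simp [hA, Matrix.mulVec, dotProduct, Matrix.diagonal_mul, Matrix.vandermonde_apply, pow_succ']
  have hw : w = A⁻¹.mulVec e := by
    rw [← hAw, Matrix.mulVec_mulVec, Matrix.nonsing_inv_mul A hdet, Matrix.one_mulVec]
  calc |w j| = |∑ k, A⁻¹ j k * e k| := by
        conv_lhs => rw [hw]
        rfl
    _ ≤ ∑ k, |A⁻¹ j k| * |e k| := by
        simpa only [abs_mul] using Finset.abs_sum_le_sum_abs (fun k => A⁻¹ j k * e k) Finset.univ
    _ ≤ ∑ k, (∑ j, ∑ k, |A⁻¹ j k|) * |e k| := by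
        refine Finset.sum_le_sum fun k _ => mul_le_mul_of_nonneg_right ?_ (abs_nonneg _)
        calc |A⁻¹ j k| ≤ ∑ k, |A⁻¹ j k| :=
              Finset.single_le_sum (f := fun k => |A⁻¹ j k|) (fun _ _ => abs_nonneg _)
                (Finset.mem_univ k)
          _ ≤ _ := Finset.single_le_sum (f := fun j => ∑ k, |A⁻¹ j k|)
                (fun _ _ => by positivity) (Finset.mem_univ j)
    _ = _ := by rw [← Finset.mul_sum]

/-- Two-sided Taylor expansion at the midpoint of an interval, with remainder `O(|v - c|^(n+1))`. -/
lemma taylor_two_sided {E : Type*} [NormedAddCommGroup E] [NormedSpace ℝ E] {n : ℕ} {c a : ℝ}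
    (ha : 0 < a) {G : ℝ → E} (hG : ContDiffOn ℝ (n + 1 : ℕ∞) G (Icc (c - a) (c + a))) :
    ∃ (p : Fin n → E) (R ρ : ℝ), 0 ≤ R ∧ 0 < ρ ∧ ρ ≤ a ∧ ∀ v, |v - c| ≤ ρ →
      ‖G v - G c - ∑ j : Fin n, (v - c) ^ ((j : ℕ) + 1) • p j‖ ≤ R * |v - c| ^ (n + 1) := by
  set S := Icc (c - a) (c + a) with hS
  have hc : c ∈ S := by constructor <;> linarith
  have hG' : ContDiffOn ℝ ((n + 1 : ℕ) : WithTop ℕ∞) G S := by exact_mod_cast hG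
  have hO := (taylor_isLittleO (convex_Icc _ _) hc hG').def (c := 1) one_pos
  have hSn : S ∈ nhds c := Icc_mem_nhds (by linarith) (by linarith)
  rw [nhdsWithin_eq_nhds.mpr hSn] at hO
  obtain ⟨ε, hε, hball⟩ := Metric.eventually_nhds_iff.mp hO
  set q : ℕ → E := fun k => ((k.factorial : ℝ)⁻¹) • iteratedDerivWithin k G S c with hq
  refine ⟨fun j => q (j + 1), 1 + ‖q (n + 1)‖, min (ε / 2) a, by positivity, by positivity,
    min_le_right _ _, fun v hv => ?_⟩
  have hv' : dist v c < ε := by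
    rw [Real.dist_eq]
    have := min_le_left (ε / 2) a
    linarith
  have h1 := hball hv'
  have hT : taylorWithinEval G (n + 1) S c v
      = G c + ∑ j : Fin n, (v - c) ^ ((j : ℕ) + 1) • q (j + 1) + (v - c) ^ (n + 1) • q (n + 1) := by
    rw [taylor_within_apply, Finset.sum_range_succ, Finset.sum_range_succ',
      Finset.sum_range]
    simp only [hq, smul_smul]
    simp [add_comm, mul_comm]
  rw [hT, one_mul, norm_pow, Real.norm_eq_abs] at h1
  calc ‖G v - G c - ∑ j : Fin n, (v - c) ^ ((j : ℕ) + 1) • q (j + 1)‖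
      = ‖(G v - (G c + ∑ j : Fin n, (v - c) ^ ((j : ℕ) + 1) • q (j + 1)
          + (v - c) ^ (n + 1) • q (n + 1))) + (v - c) ^ (n + 1) • q (n + 1)‖ := by
        congr 1; abel
    _ ≤ |v - c| ^ (n + 1) + |v - c| ^ (n + 1) * ‖q (n + 1)‖ := by
        refine (norm_add_le _ _).trans (add_le_add h1 ?_)
        rw [norm_smul, norm_pow, Real.norm_eq_abs]
    _ = _ := by ring

lemma exp_abs_integral_le {φ : ℝ → ℝ} {K c v a : ℝ} (hφ : ∀ u, |φ u| ≤ K) (hv : |v - c| ≤ a) :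
    Real.exp |∫ τ in c..v, φ τ| ≤ Real.exp (K * a) := by
  have hK : 0 ≤ K := (abs_nonneg _).trans (hφ c)
  have h := intervalIntegral.norm_integral_le_of_norm_le_const (a := c) (b := v) (f := φ) (C := K)
    (fun u _ => hφ u)
  rw [Real.norm_eq_abs] at h
  exact Real.exp_le_exp.mpr (h.trans (mul_le_mul_of_nonneg_left hv hK))

/-- One coordinate of the error. By variation of constants, `e^{∫ l}·x/α` has derivative
`-e^{∫ (l+s)}·(G + B)` along the exact solution, where `G` is the parameterization along the
trajectory and `B` is the integral of `e^{-∫ s}·b`. Hence the propagated error is the weighted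
integral of `G` minus the polynomial with coefficients `g₀, w` used by the scheme. -/
lemma error_eq_integral {n : ℕ} {c h : ℝ} (hh : 0 < h) {α α' l s b x F : ℝ → ℝ}
    (hαpos : ∀ u, 0 < α u) (hα : ∀ u, HasDerivAt α (α' u) u)
    (hl : Continuous l) (hs : Continuous s) (hb : Continuous b)
    (hx : ∀ u ∈ Icc c (c + h), HasDerivWithinAt x
      ((α' u / α u - l u) * x u - α u * F u) (Icc c (c + h)) u)
    (hG : ContinuousOn (fun v => Real.exp (-(∫ τ in c..v, s τ)) * F v
      - ∫ r in c..v, Real.exp (-(∫ τ in c..r, s τ)) * b r) (Icc c (c + h)))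
    (y g₀ : ℝ) (w : Fin n → ℝ) :
    α (c + h) * Real.exp (-(∫ τ in c..(c + h), l τ)) *
      (y / α c
        - (∫ v in c..(c + h), Real.exp (∫ τ in c..v, l τ + s τ) *
            (∫ rr in c..v, Real.exp (-(∫ τ in c..rr, s τ)) * b rr))
        - g₀ * (∫ v in c..(c + h), Real.exp (∫ τ in c..v, l τ + s τ))
        - ∑ j : Fin n, (Nat.factorial ((j : ℕ) + 1) : ℝ) * w j *
            ∫ v in c..(c + h), Real.exp (∫ τ in c..v, l τ + s τ) *
              (v - c) ^ ((j : ℕ) + 1) / (Nat.factorial ((j : ℕ) + 1) : ℝ))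
      - x (c + h)
      - (α (c + h) * Real.exp (-(∫ τ in c..(c + h), l τ)) / α c) * (y - x c)
    = α (c + h) * Real.exp (-(∫ τ in c..(c + h), l τ)) *
        ∫ v in c..(c + h), Real.exp (∫ τ in c..v, l τ + s τ) *
          ((Real.exp (-(∫ τ in c..v, s τ)) * F v
            - ∫ r in c..v, Real.exp (-(∫ τ in c..r, s τ)) * b r)
            - g₀ - ∑ j : Fin n, (v - c) ^ ((j : ℕ) + 1) * w j) := by
  have hch : c ≤ c + h := by linarith
  set G : ℝ → ℝ := fun v => Real.exp (-(∫ τ in c..v, s τ)) * F v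
      - ∫ r in c..v, Real.exp (-(∫ τ in c..r, s τ)) * b r with hGdef
  set B : ℝ → ℝ := fun v => ∫ r in c..v, Real.exp (-(∫ τ in c..r, s τ)) * b r with hB
  set E : ℝ → ℝ := fun v => Real.exp (∫ τ in c..v, l τ + s τ) with hE
  have hprim : ∀ φ : ℝ → ℝ, Continuous φ → Continuous fun v => ∫ τ in c..v, φ τ := fun φ hφ =>
    intervalIntegral.continuous_primitive (fun _ _ => hφ.intervalIntegrable _ _) c
  have hEc : Continuous E := Real.continuous_exp.comp (hprim _ (hl.add hs))
  have hBc : Continuous B := hprim _ ((Real.continuous_exp.comp (hprim _ hs).neg).mul hb)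
  have hGi : IntervalIntegrable (fun v => E v * G v) volume c (c + h) := by
    apply ContinuousOn.intervalIntegrable
    rw [uIcc_of_le hch]
    exact hEc.continuousOn.mul hG
  have hBi : IntervalIntegrable (fun v => E v * B v) volume c (c + h) :=
    (hEc.mul hBc).intervalIntegrable _ _
  have hlder : ∀ u, HasDerivAt (fun v => ∫ τ in c..v, l τ) (l u) u := fun u =>
    intervalIntegral.integral_hasDerivAt_right (hl.intervalIntegrable _ _)
      (hl.stronglyMeasurableAtFilter _ _) hl.continuousAt
  -- the exact solution in the variable `e^{∫ l} x / α`
  have hFTC : ∫ v in c..(c + h), -(E v * G v + E v * B v)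
      = Real.exp (∫ τ in c..(c + h), l τ) * x (c + h) / α (c + h) - x c / α c := by
    have hder : ∀ u ∈ Icc c (c + h), HasDerivWithinAt
        (fun v => Real.exp (∫ τ in c..v, l τ) * x v / α v) (-(E u * G u + E u * B u))
        (Icc c (c + h)) u := by
      intro u hu
      have h1 := (((hlder u).exp.hasDerivWithinAt (s := Icc c (c + h))).mul (hx u hu)).div
        ((hα u).hasDerivWithinAt) (hαpos u).ne'
      refine h1.congr_deriv ?_
      have hEu : E u = Real.exp (∫ τ in c..u, l τ) * Real.exp (∫ τ in c..u, s τ) := by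
        simp only [hE]
        rw [intervalIntegral.integral_add (hl.intervalIntegrable _ _) (hs.intervalIntegrable _ _),
          Real.exp_add]
      have hes : Real.exp (∫ τ in c..u, s τ) * Real.exp (-∫ τ in c..u, s τ) = 1 := by
        rw [← Real.exp_add]; simp
      have hGB : E u * G u + E u * B u = Real.exp (∫ τ in c..u, l τ) * F u := by
        rw [← mul_add]
        simp only [hGdef, hB, sub_add_cancel]
        rw [hEu]
        linear_combination (Real.exp (∫ τ in c..u, l τ) * F u) * hes
      rw [hGB]
      have := (hαpos u).ne'
      simp only [Pi.mul_apply]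
      field_simp
      ring
    rw [intervalIntegral.integral_eq_sub_of_hasDerivAt_of_le hch
      (f := fun v => Real.exp (∫ τ in c..v, l τ) * x v / α v)
      (fun u hu => (hder u hu).continuousWithinAt)
      (fun u hu => (hder u (Ioo_subset_Icc_self hu)).hasDerivAt (Icc_mem_nhds hu.1 hu.2))
      (hGi.add hBi).neg]
    simp
  rw [intervalIntegral.integral_neg, intervalIntegral.integral_add hGi hBi] at hFTC
  -- the weighted integral of the interpolating polynomial splits into the terms of the scheme
  have hsplit : ∫ v in c..(c + h), E v * (G v - g₀ - ∑ j : Fin n, (v - c) ^ ((j : ℕ) + 1) * w j)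
      = (∫ v in c..(c + h), E v * G v) - g₀ * (∫ v in c..(c + h), E v)
        - ∑ j : Fin n, (Nat.factorial ((j : ℕ) + 1) : ℝ) * w j *
            ∫ v in c..(c + h), E v * (v - c) ^ ((j : ℕ) + 1) / (Nat.factorial ((j : ℕ) + 1) : ℝ) := by
    have hE1 : IntervalIntegrable (fun v => g₀ * E v) volume c (c + h) :=
      (continuous_const.mul hEc).intervalIntegrable _ _
    have hE2 : ∀ j ∈ (Finset.univ : Finset (Fin n)),
        IntervalIntegrable (fun v => w j * (E v * (v - c) ^ ((j : ℕ) + 1))) volume c (c + h) :=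
      fun j _ => Continuous.intervalIntegrable (by fun_prop) _ _
    have hfun : (fun v => E v * (G v - g₀ - ∑ j : Fin n, (v - c) ^ ((j : ℕ) + 1) * w j))
        = fun v => E v * G v - g₀ * E v - ∑ j : Fin n, w j * (E v * (v - c) ^ ((j : ℕ) + 1)) := by
      funext v
      rw [mul_sub, mul_sub, Finset.mul_sum, mul_comm g₀]
      congr 1
      exact Finset.sum_congr rfl fun j _ => by ring
    have hE2s : IntervalIntegrable
        (fun v => ∑ j : Fin n, w j * (E v * (v - c) ^ ((j : ℕ) + 1))) volume c (c + h) :=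
      Continuous.intervalIntegrable (by fun_prop) _ _
    rw [hfun, intervalIntegral.integral_sub (hGi.sub hE1) hE2s,
      intervalIntegral.integral_sub hGi hE1, intervalIntegral.integral_finsetSum hE2,
      intervalIntegral.integral_const_mul]
    congr 1
    refine Finset.sum_congr rfl fun j _ => ?_
    rw [intervalIntegral.integral_const_mul, intervalIntegral.integral_div]
    have : (Nat.factorial ((j : ℕ) + 1) : ℝ) ≠ 0 := by positivity
    field_simp
  rw [hsplit]
  have hel : Real.exp (-∫ τ in c..(c + h), l τ) * Real.exp (∫ τ in c..(c + h), l τ) = 1 := by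
    rw [← Real.exp_add]; simp
  have hα1 : α (c + h) * (α (c + h))⁻¹ = 1 := mul_inv_cancel₀ (hαpos _).ne'
  set IS := ∑ j : Fin n, (Nat.factorial ((j : ℕ) + 1) : ℝ) * w j *
            ∫ v in c..(c + h), E v * (v - c) ^ ((j : ℕ) + 1) / (Nat.factorial ((j : ℕ) + 1) : ℝ)
  have hxt : x (c + h) = α (c + h) * Real.exp (-∫ τ in c..(c + h), l τ)
      * (Real.exp (∫ τ in c..(c + h), l τ) * x (c + h) / α (c + h)) := by
    rw [div_eq_mul_inv]
    linear_combination (-x (c + h) * (α (c + h) * (α (c + h))⁻¹)) * hel - x (c + h) * hα1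
  linear_combination (-1 : ℝ) * hxt
    + α (c + h) * Real.exp (-∫ τ in c..(c + h), l τ) * hFTC

lemma gpar_lipschitz {D : ℕ} {s b : ℝ → Fin D → ℝ} {Cs : ℝ} (hsB : ∀ u i, |s u i| ≤ Cs)
    {f : (Fin D → ℝ) → ℝ → Fin D → ℝ} {L : ℝ}
    (hLip : ∀ (u : ℝ) (xv yv : Fin D → ℝ), ‖f xv u - f yv u‖ ≤ L * ‖xv - yv‖)
    {c a v : ℝ} (hv : |v - c| ≤ a) (y z : Fin D → ℝ) (i : Fin D) :
    |gpar D s b f c y v i - gpar D s b f c z v i| ≤ Real.exp (Cs * a) * |L| * ‖y - z‖ := by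
  have h1 : gpar D s b f c y v i - gpar D s b f c z v i
      = Real.exp (-(∫ τ in c..v, s τ i)) * (f y v - f z v) i := by
    simp only [gpar, Pi.sub_apply]; ring
  have h2 : Real.exp (-(∫ τ in c..v, s τ i)) ≤ Real.exp (Cs * a) :=
    (Real.exp_le_exp.mpr (neg_le_abs _)).trans (exp_abs_integral_le (fun u => hsB u i) hv)
  have h3 : |(f y v - f z v) i| ≤ |L| * ‖y - z‖ :=
    (norm_le_pi_norm (f y v - f z v) i).trans ((hLip v y z).trans
      (mul_le_mul_of_nonneg_right (le_abs_self L) (norm_nonneg _)))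
  rw [h1, abs_mul, abs_of_pos (Real.exp_pos _), mul_assoc]
  exact mul_le_mul h2 h3 (abs_nonneg _) (Real.exp_pos _).le

/-- One coordinate of the interpolation error. If `G` agrees up to `η` with the polynomial with
coefficients `g, p` at the nodes and at the point `c + t`, `0 ≤ t ≤ h`, and the interpolation data
are those of `G` up to `η`, then the interpolating polynomial `g₀, w` is close to `G` at `c + t`. -/
lemma interpolation_error {n : ℕ} {r : Fin n → ℝ} {M : ℝ}
    (hM : ∀ w e : Fin n → ℝ, (∀ k, ∑ j : Fin n, r k ^ ((j : ℕ) + 1) * w j = e k) →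
      ∀ j, |w j| ≤ M * ∑ k, |e k|) (hM0 : 0 ≤ M)
    {h t η g g₀ Gt : ℝ} (ht : 0 ≤ t) (hth : t ≤ h) {p w Gk d : Fin n → ℝ}
    (hw : ∀ k, ∑ j : Fin n, (r k * h) ^ ((j : ℕ) + 1) * w j = d k - g₀)
    (hdk : ∀ k, |d k - Gk k| ≤ η) (hg : |g₀ - g| ≤ η)
    (hGk : ∀ k, |Gk k - g - ∑ j : Fin n, (r k * h) ^ ((j : ℕ) + 1) * p j| ≤ η)
    (hGt : |Gt - g - ∑ j : Fin n, t ^ ((j : ℕ) + 1) * p j| ≤ η) :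
    |Gt - g₀ - ∑ j : Fin n, t ^ ((j : ℕ) + 1) * w j| ≤ (2 + n * (M * (n * 3))) * η := by
  have hη : 0 ≤ η := (abs_nonneg _).trans hg
  have hcoef : ∀ j : Fin n, |h ^ ((j : ℕ) + 1) * (w j - p j)| ≤ M * (n * (3 * η)) := by
    intro j
    refine (hM (fun j => h ^ ((j : ℕ) + 1) * (w j - p j)) (fun k => (d k - Gk k) - (g₀ - g)
      + (Gk k - g - ∑ j : Fin n, (r k * h) ^ ((j : ℕ) + 1) * p j)) ?_ j).trans ?_
    · intro k
      have h1 : ∑ j : Fin n, r k ^ ((j : ℕ) + 1) * (h ^ ((j : ℕ) + 1) * (w j - p j))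
          = ∑ j : Fin n, (r k * h) ^ ((j : ℕ) + 1) * w j
            - ∑ j : Fin n, (r k * h) ^ ((j : ℕ) + 1) * p j := by
        rw [← Finset.sum_sub_distrib]
        exact Finset.sum_congr rfl fun j _ => by rw [mul_pow]; ring
      rw [h1, hw k]; ring
    · refine mul_le_mul_of_nonneg_left ?_ hM0
      have : ∀ k ∈ (Finset.univ : Finset (Fin n)), |(d k - Gk k) - (g₀ - g)
          + (Gk k - g - ∑ j : Fin n, (r k * h) ^ ((j : ℕ) + 1) * p j)| ≤ 3 * η := by
        intro k _
        have h1 := abs_add_le ((d k - Gk k) - (g₀ - g))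
          (Gk k - g - ∑ j : Fin n, (r k * h) ^ ((j : ℕ) + 1) * p j)
        have h2 := abs_sub (d k - Gk k) (g₀ - g)
        linarith [hdk k, hGk k]
      simpa using Finset.sum_le_sum this
  have hterm : ∀ j ∈ (Finset.univ : Finset (Fin n)),
      |t ^ ((j : ℕ) + 1) * (w j - p j)| ≤ M * (n * (3 * η)) := by
    intro j _
    refine le_trans ?_ (hcoef j)
    rw [abs_mul, abs_mul]
    refine mul_le_mul_of_nonneg_right ?_ (abs_nonneg _)
    rw [abs_of_nonneg (by positivity), abs_of_nonneg (pow_nonneg (ht.trans hth) _)]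
    gcongr
  have hsum : |∑ j : Fin n, t ^ ((j : ℕ) + 1) * (w j - p j)| ≤ n * (M * (n * (3 * η))) := by
    refine (Finset.abs_sum_le_sum_abs _ _).trans ?_
    simpa using Finset.sum_le_sum hterm
  have hdecomp : Gt - g₀ - ∑ j : Fin n, t ^ ((j : ℕ) + 1) * w j
      = (Gt - g - ∑ j : Fin n, t ^ ((j : ℕ) + 1) * p j) - (g₀ - g)
        - ∑ j : Fin n, t ^ ((j : ℕ) + 1) * (w j - p j) := by
    simp only [mul_sub, Finset.sum_sub_distrib]; ring
  rw [hdecomp]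
  have h1 := abs_sub ((Gt - g - ∑ j : Fin n, t ^ ((j : ℕ) + 1) * p j) - (g₀ - g))
    (∑ j : Fin n, t ^ ((j : ℕ) + 1) * (w j - p j))
  have h2 := abs_sub (Gt - g - ∑ j : Fin n, t ^ ((j : ℕ) + 1) * p j) (g₀ - g)
  linarith

/-- **Local truncation error with inexact previous values (Lemma B.1).**
If the `(n+1)`-th order local approximation is computed from inexact values
`x̂_s, x̂_{λ_{i_1}}, …, x̂_{λ_{i_n}}`, then, writing `Δ_u := x̂_u − x(λ_u)`,
`‖Δ_t − (α(λ_t)A(λ_s,λ_t)/α(λ_s))·Δ_s‖ ≤ C·h·(‖Δ_s‖ + Σ_k ‖Δ_{λ_{i_k}}‖ + h^{n+1})`. -/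
theorem dpm_solver_v3_local_error_inexact
    (D n : ℕ) (hD : 1 ≤ D)
    (r : Fin n → ℝ) (hrne : ∀ k, r k ≠ 0) (hrinj : Function.Injective r)
    (ls a : ℝ) (ha : 0 < a)
    (α α' : ℝ → ℝ) (hαpos : ∀ u, 0 < α u)
    (hα : ∀ u, HasDerivAt α (α' u) u) (hα' : Continuous α')
    (l s b : ℝ → Fin D → ℝ)
    (hl : ContDiff ℝ n l) (hs : ContDiff ℝ n s) (hb : ContDiff ℝ n b)
    (Cl Cs Cb : ℝ)
    (hlB : ∀ u i, |l u i| ≤ Cl) (hsB : ∀ u i, |s u i| ≤ Cs) (hbB : ∀ u i, |b u i| ≤ Cb)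
    -- `f(·, λ)` is Lipschitz in its first argument uniformly in `λ`
    (f : (Fin D → ℝ) → ℝ → Fin D → ℝ) (L : ℝ)
    (hLip : ∀ (u : ℝ) (xv yv : Fin D → ℝ), ‖f xv u - f yv u‖ ≤ L * ‖xv - yv‖)
    -- the exact solution `x` of `x′ = (α̇/α − l)·x − α·f(x, λ)` near `λs`
    (x : ℝ → Fin D → ℝ)
    (hx : ∀ u ∈ Set.Icc (ls - a) (ls + a), ∀ i : Fin D,
      HasDerivWithinAt (fun v => x v i)
        ((α' u / α u - l u i) * x u i - α u * f (x u) u i) (Set.Icc (ls - a) (ls + a)) u)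
    -- the generalized parameterization along the exact trajectory is `(n+1)`-times
    -- continuously differentiable
    (hgsmooth : ContDiffOn ℝ (n + 1 : ℕ∞)
      (fun u => gpar D s b f ls (x u) u) (Set.Icc (ls - a) (ls + a))) :
    ∃ C > (0:ℝ), ∃ h₀ > (0:ℝ), ∃ δ₀ > (0:ℝ), ∀ h : ℝ, 0 < h → h ≤ h₀ →
      ∀ (xs : Fin D → ℝ) (xik : Fin n → Fin D → ℝ) (u : Fin n → Fin D → ℝ),
        ‖xs - x ls‖ ≤ δ₀ →
        (∀ k : Fin n, ‖xik k - x (ls + r k * h)‖ ≤ δ₀) →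
        -- the Vandermonde-type system computed from the inexact values
        (∀ k : Fin n, ∀ i : Fin D,
          (∑ j : Fin n, (r k * h) ^ ((j : ℕ) + 1) * u j i)
            = gpar D s b f ls (xik k) (ls + r k * h) i - gpar D s b f ls xs ls i) →
        -- `Δ_t − (α(λt)·A(λs,λt)/α(λs))·Δ_s` is small
        ‖((fun i =>
            -- x̂_t computed from the inexact values
            (α (ls + h) * Real.exp (-(∫ τ in ls..(ls + h), l τ i)) *
              (xs i / α ls
                - (∫ v in ls..(ls + h), Real.exp (∫ τ in ls..v, l τ i + s τ i) *
                    (∫ rr in ls..v, Real.exp (-(∫ τ in ls..rr, s τ i)) * b rr i))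
                - gpar D s b f ls xs ls i *
                    (∫ v in ls..(ls + h), Real.exp (∫ τ in ls..v, l τ i + s τ i))
                - ∑ j : Fin n, (Nat.factorial ((j : ℕ) + 1) : ℝ) * u j i *
                    ∫ v in ls..(ls + h), Real.exp (∫ τ in ls..v, l τ i + s τ i) *
                      (v - ls) ^ ((j : ℕ) + 1) / (Nat.factorial ((j : ℕ) + 1) : ℝ)))
            - x (ls + h) i
            - (α (ls + h) * Real.exp (-(∫ τ in ls..(ls + h), l τ i)) / α ls) *
                (xs i - x ls i)) : Fin D → ℝ)‖
          ≤ C * h * (‖xs - x ls‖ + (∑ k : Fin n, ‖xik k - x (ls + r k * h)‖) + h ^ (n + 1)) := by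
  have hlc : Continuous l := hl.continuous
  have hsc : Continuous s := hs.continuous
  have hbc : Continuous b := hb.continuous
  set G : ℝ → Fin D → ℝ := fun u => gpar D s b f ls (x u) u with hGdef
  obtain ⟨M, hM0, hM⟩ := scaled_vandermonde_bound r hrne hrinj
  obtain ⟨p, R, ρ, hR, hρ, hρa, hTaylor⟩ := taylor_two_sided ha hgsmooth
  have hαc : Continuous α := continuous_iff_continuousAt.mpr fun u => (hα u).continuousAt
  obtain ⟨Aα, hAα⟩ := (isCompact_Icc (a := ls) (b := ls + a)).exists_bound_of_continuousOn
    hαc.continuousOn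
  have hAα0 : 0 ≤ Aα := (norm_nonneg _).trans (hAα ls ⟨le_rfl, by linarith⟩)
  set Q : ℝ := 1 + ∑ k, |r k| with hQ
  have hQ1 : 1 ≤ Q := by
    have : 0 ≤ ∑ k, |r k| := by positivity
    linarith
  have hrQ : ∀ k, |r k| ≤ Q := fun k => by
    have := Finset.single_le_sum (f := fun k => |r k|) (fun _ _ => abs_nonneg _) (Finset.mem_univ k)
    linarith
  set K : ℝ := Real.exp (Cs * a) * |L| + R * Q ^ (n + 1) with hK
  have hK0 : 0 ≤ K := by positivity
  set K3 : ℝ := (2 + n * (M * (n * 3))) * K with hK3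
  have hK30 : 0 ≤ K3 := by positivity
  -- bounds for `α`, for `e^{-∫ l}` and for the weight `e^{∫ (l+s)}`, times the interpolation constant
  set C0 : ℝ := Aα * Real.exp (Cl * a) * (Real.exp ((Cl + Cs) * a) * K3) with hC0
  have hC00 : 0 ≤ C0 := by positivity
  refine ⟨C0 + 1, by positivity, ρ / Q, by positivity, 1, one_pos, ?_⟩
  intro h hh hh0 xs xik u _ _ hsys
  have hQh : Q * h ≤ ρ := by
    rw [le_div_iff₀ (by positivity)] at hh0
    linarith
  have hhρ : h ≤ ρ := le_trans (by nlinarith) hQh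
  have hha : h ≤ a := hhρ.trans hρa
  have hrh : ∀ k, |r k * h| ≤ Q * h := fun k => by
    rw [abs_mul, abs_of_pos hh]
    exact mul_le_mul_of_nonneg_right (hrQ k) hh.le
  set S : ℝ := ‖xs - x ls‖ + (∑ k : Fin n, ‖xik k - x (ls + r k * h)‖) + h ^ (n + 1) with hS
  have hΔ0 : 0 ≤ ∑ k : Fin n, ‖xik k - x (ls + r k * h)‖ := by positivity
  have hh1 : 0 ≤ h ^ (n + 1) := by positivity
  have hS0 : 0 ≤ S := by positivity
  have hΔs : ‖xs - x ls‖ ≤ S := by linarith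
  have hΔk : ∀ k, ‖xik k - x (ls + r k * h)‖ ≤ S := fun k => by
    have := Finset.single_le_sum (f := fun k => ‖xik k - x (ls + r k * h)‖)
      (fun _ _ => norm_nonneg _) (Finset.mem_univ k)
    linarith [norm_nonneg (xs - x ls)]
  have hLipS : ∀ {d : ℝ}, d ≤ S → Real.exp (Cs * a) * |L| * d ≤ K * S := fun {d} hd => by
    have h1 : 0 ≤ R * Q ^ (n + 1) := by positivity
    exact (mul_le_mul_of_nonneg_left hd (by positivity)).trans
      (mul_le_mul_of_nonneg_right (by linarith) hS0)
  -- Taylor remainder at every point within distance `Q * h` of the base point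
  have hTay : ∀ (t : ℝ) (i : Fin D), |t| ≤ Q * h →
      |G (ls + t) i - G ls i - ∑ j : Fin n, t ^ ((j : ℕ) + 1) * p j i| ≤ K * S := by
    intro t i ht
    have h1 := hTaylor (ls + t) (by simpa using ht.trans hQh)
    have h2 := (norm_le_pi_norm _ i).trans h1
    simp only [add_sub_cancel_left, Pi.sub_apply, Finset.sum_apply, Pi.smul_apply, smul_eq_mul,
      Real.norm_eq_abs] at h2
    refine h2.trans ?_
    calc R * |t| ^ (n + 1) ≤ R * (Q * h) ^ (n + 1) := by gcongr
      _ = R * Q ^ (n + 1) * h ^ (n + 1) := by rw [mul_pow]; ring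
      _ ≤ K * S := by
        refine mul_le_mul ?_ ?_ hh1 hK0
        · have : 0 ≤ Real.exp (Cs * a) * |L| := by positivity
          linarith
        · linarith [norm_nonneg (xs - x ls)]
  have hsub : Icc ls (ls + h) ⊆ Icc (ls - a) (ls + a) := Icc_subset_Icc (by linarith) (by linarith)
  refine (pi_norm_le_iff_of_nonneg (by positivity)).mpr fun i => ?_
  have hproj : ∀ φ : ℝ → Fin D → ℝ, Continuous φ → Continuous fun v => φ v i :=
    fun φ hφ => (continuous_apply i).comp hφ
  have hGi : ContinuousOn (fun v => G v i) (Icc ls (ls + h)) :=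
    (continuous_apply i).comp_continuousOn (hgsmooth.continuousOn.mono hsub)
  have herr := error_eq_integral (n := n) hh hαpos hα (hproj l hlc) (hproj s hsc) (hproj b hbc)
    (x := fun v => x v i) (F := fun v => f (x v) v i)
    (fun v hv => (hx v (hsub hv) i).mono hsub) hGi (xs i) (gpar D s b f ls xs ls i)
    (fun j => u j i)
  rw [herr]
  have hint : ‖∫ v in ls..(ls + h), Real.exp (∫ τ in ls..v, l τ i + s τ i) *
      (G v i - gpar D s b f ls xs ls i - ∑ j : Fin n, (v - ls) ^ ((j : ℕ) + 1) * u j i)‖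
      ≤ Real.exp ((Cl + Cs) * a) * (K3 * S) * |ls + h - ls| := by
    refine intervalIntegral.norm_integral_le_of_norm_le_const fun v hv => ?_
    rw [uIoc_of_le (by linarith)] at hv
    have ht0 : 0 ≤ v - ls := by linarith [hv.1]
    have hth : v - ls ≤ h := by linarith [hv.2]
    rw [norm_mul, Real.norm_eq_abs, Real.norm_eq_abs, abs_of_pos (Real.exp_pos _)]
    refine mul_le_mul ?_ ?_ (abs_nonneg _) (Real.exp_pos _).le
    · refine (Real.exp_le_exp.mpr (le_abs_self _)).trans (exp_abs_integral_le (fun τ => ?_) ?_)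
      · exact (abs_add_le _ _).trans (add_le_add (hlB τ i) (hsB τ i))
      · rw [abs_of_nonneg ht0]; linarith
    · rw [hK3, mul_assoc]
      refine interpolation_error hM hM0 ht0 hth (g := G ls i) (p := fun j => p j i)
        (Gk := fun k => G (ls + r k * h) i)
        (d := fun k => gpar D s b f ls (xik k) (ls + r k * h) i) (fun k => hsys k i) ?_ ?_ ?_ ?_
      · intro k
        exact (gpar_lipschitz hsB hLip (by simpa using ((hrh k).trans hQh).trans hρa) _ _ i).trans
          (hLipS (hΔk k))
      · exact (gpar_lipschitz hsB hLip (by simpa using ha.le) _ _ i).trans (hLipS hΔs)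
      · exact fun k => hTay _ i (hrh k)
      · have := hTay (v - ls) i (by rw [abs_of_nonneg ht0]; nlinarith)
        rwa [add_sub_cancel] at this
  rw [add_sub_cancel_left, abs_of_pos hh] at hint
  rw [norm_mul, norm_mul]
  have h1 : ‖α (ls + h)‖ ≤ Aα := hAα _ ⟨by linarith, by linarith⟩
  have h2 : ‖Real.exp (-(∫ τ in ls..(ls + h), l τ i))‖ ≤ Real.exp (Cl * a) := by
    rw [Real.norm_eq_abs, abs_of_pos (Real.exp_pos _)]
    refine (Real.exp_le_exp.mpr (neg_le_abs _)).trans (exp_abs_integral_le (fun u => hlB u i) ?_)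
    rw [add_sub_cancel_left, abs_of_pos hh]; exact hha
  calc _ ≤ Aα * Real.exp (Cl * a) * (Real.exp ((Cl + Cs) * a) * (K3 * S) * h) := by
        refine mul_le_mul (mul_le_mul h1 h2 (norm_nonneg _) hAα0) hint (norm_nonneg _)
          (by positivity)
    _ = C0 * h * S := by rw [hC0]; ring
    _ ≤ (C0 + 1) * h * S := by gcongr; linarith
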